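/- Let k ≥ 1 and n ≥ k + 1. Let s_1, …, s_l be (k−1)-simplices in ℝ^n and F_1, …, F_l ∈ ℝ^n, and suppose the finite system of forces F = Σ_{i=1}^{l} F_i μ_{s_i} is in equilibrium, i.e. Σ_{i=1}^{l} H^{k−1}(s_i) F_i = 0 and Σ_{i=1}^{l} H^{k−1}(s_i) (ĥ(s_i) ∧ F_i) = 0. Then there exist finitely many k-simplices τ_1, …, τ_m in ℝ^n and symmetric real n×n matrices A_1, …, A_m, with each A_j structural for τ_j, such that F = Σ_{j=1}^{m} A_j ⊗ Beam(τ_j) as ℝ^n-valued vector measures. -/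

import Mathlib

open MeasureTheory Matrix
open scoped RealInnerProductSpace

noncomputable section

abbrev Euc (n : ℕ) : Type := EuclideanSpace ℝ (Fin n)

/-- The action of an `n × n` real matrix on a vector of `ℝⁿ`. -/
def matVec {n : ℕ} (A : Matrix (Fin n) (Fin n) ℝ) (v : Euc n) : Euc n :=
  Matrix.toEuclideanLin A v

/-- `wedge v w = v wᵀ − w vᵀ`. -/
def wedge {n : ℕ} (v w : Euc n) : Matrix (Fin n) (Fin n) ℝ :=
  Matrix.of fun p q => v p * w q - w p * v q

/-- `rankOne v = v vᵀ`. -/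
def rankOne {n : ℕ} (v : Euc n) : Matrix (Fin n) (Fin n) ℝ :=
  Matrix.of fun p q => v p * v q

/-- The (closed) simplex spanned by a family of points: the convex hull of its range. -/
def simplexSet {n : ℕ} {ι : Type*} (b : ι → Euc n) : Set (Euc n) :=
  convexHull ℝ (Set.range b)

/-- The barycenter of a finite family of points. -/
def bary {n : ℕ} {ι : Type*} [Fintype ι] (b : ι → Euc n) : Euc n :=
  (Fintype.card ι : ℝ)⁻¹ • ∑ i, b i

/-- The vertices of the face of the simplex `b` opposite to the vertex `i`. -/
def face {n K : ℕ} (b : Fin K → Euc n) (i : Fin K) : {j : Fin K // j ≠ i} → Euc n :=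
  fun j => b j.1

/-- The vector measure `Σᵢ Fᵢ μ_{sᵢ}` of a finite system of forces, as an
`ℝⁿ`-valued set function; here `d` is the Hausdorff dimension of the simplices. -/
def sys {n l : ℕ} {ι : Type*} (d : ℝ) (s : Fin l → ι → Euc n) (F : Fin l → Euc n) :
    Set (Euc n) → Euc n :=
  fun S => ∑ i, (μH[d] (S ∩ simplexSet (s i))).toReal • F i

/-- A finite system of forces is in equilibrium: zero net force and zero net torque. -/
def equil {n l : ℕ} {ι : Type*} [Fintype ι] (d : ℝ) (s : Fin l → ι → Euc n)
    (F : Fin l → Euc n) : Prop :=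
  (∑ i, (μH[d] (simplexSet (s i))).toReal • F i = 0) ∧
  (∑ i, (μH[d] (simplexSet (s i))).toReal • wedge (bary (s i)) (F i) = 0)

/-- `v` is the outward unit conormal of the face of `b` opposite vertex `i`. -/
def IsConormal {n K : ℕ} (b : Fin K → Euc n) (i : Fin K) (v : Euc n) : Prop :=
  v ∈ vectorSpan ℝ (Set.range b) ∧ ‖v‖ = 1 ∧
    (∀ w ∈ vectorSpan ℝ (Set.range (face b i)), ⟪v, w⟫ = 0) ∧
    ⟪v, b i - bary (face b i)⟫ < 0

open scoped Classical in
/-- The outward unit conormal of the face of `b` opposite vertex `i`. -/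
def conormal {n K : ℕ} (b : Fin K → Euc n) (i : Fin K) : Euc n :=
  if h : ∃ v, IsConormal b i v then h.choose else 0

/-- A matrix is structural for a simplex if its range is contained in the
direction space of the simplex. -/
def Structural {n : ℕ} {ι : Type*} (A : Matrix (Fin n) (Fin n) ℝ) (b : ι → Euc n) : Prop :=
  ∀ v, matVec A v ∈ vectorSpan ℝ (Set.range b)

/-- The beam `A ⊗ Beam(τ)` of a simplex `τ` with `K` vertices (so of dimension `K − 1`,
with faces of dimension `K − 2`), as an `ℝⁿ`-valued set function. -/
def beam {n K : ℕ} (A : Matrix (Fin n) (Fin n) ℝ) (b : Fin K → Euc n) :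
    Set (Euc n) → Euc n :=
  fun S => ∑ i, (μH[(K : ℝ) - 2] (S ∩ simplexSet (face b i))).toReal • matVec A (conormal b i)

/-- `G` is a finite sum of beams over simplices with `K` vertices, with symmetric
coefficient matrices that are structural for their simplices. -/
def IsBeamSum {n : ℕ} (K : ℕ) (G : Set (Euc n) → Euc n) : Prop :=
  ∃ (m : ℕ) (τ : Fin m → Fin K → Euc n) (A : Fin m → Matrix (Fin n) (Fin n) ℝ),
    (∀ j, AffineIndependent ℝ (τ j)) ∧ (∀ j, (A j).IsSymm) ∧
    (∀ j, Structural (A j) (τ j)) ∧ (G = fun S => ∑ j, beam (A j) (τ j) S)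

/-!
By duality it suffices to show that a linear functional `φ` which vanishes on all beams vanishes on
every equilibrium system. Let `v s` be the vector representing `φ` on forces spread uniformly over
the simplex `s`. Take an edge `u` of a `k`-simplex. The beam of `u uᵀ` loads only the two faces
opposite the endpoints of `u`, with opposite total forces parallel to `u`, because these faces have
the same projection along `u`. Hence `φ` vanishes on it exactly when exchanging one endpoint of `u`
for the other changes `v` by a vector orthogonal to `u`. On sufficiently many points in general
position this flex condition is rigid: `v s = v₀ + Ω (∑ x ∈ s, x)` with `Ω` skew, so that `v` is an
infinitesimal rigid motion evaluated at the barycenter of `s`, up to the factor `k`. Such a motion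
does no work on a system with zero total force and zero total torque.
-/

section Skew

variable {E : Type*} [NormedAddCommGroup E] [InnerProductSpace ℝ E]

lemma inner_map_left_of_isSkewAdjoint {Ω : E →ₗ[ℝ] E} (hΩ : (innerₗ E).IsSkewAdjoint Ω) (x y : E) :
    ⟪Ω x, y⟫ = -⟪x, Ω y⟫ := by
  simpa using hΩ x y

lemma linearMap_ext_of_vectorSpan_eq_top {𝕜 V W : Type*} [Ring 𝕜] [AddCommGroup V] [Module 𝕜 V]
    [AddCommGroup W] [Module 𝕜 W] {f g : V →ₗ[𝕜] W} {t : Set V} (ht : vectorSpan 𝕜 t = ⊤)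
    (h : ∀ a ∈ t, ∀ a' ∈ t, f (a - a') = g (a - a')) : f = g := by
  refine LinearMap.ext_on ht ?_
  rintro _ ⟨a, ha, a', ha', rfl⟩
  exact h a ha a' ha'

lemma eq_zero_of_inner_sub_eq_zero {t : Set E} (ht : vectorSpan ℝ t = ⊤) {z : E}
    (h : ∀ a ∈ t, ∀ a' ∈ t, ⟪z, a - a'⟫ = 0) : z = 0 := by
  have hz : innerₗ E z = 0 := linearMap_ext_of_vectorSpan_eq_top ht (by simpa using h)
  simpa using congr($hz z)

lemma inner_add_inner_eq_zero_of_mem_span {S : Set (E × E)}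
    (hS : ∀ z ∈ S, ∀ w ∈ S, ⟪z.2, w.1⟫ + ⟪z.1, w.2⟫ = 0) {z w : E × E}
    (hz : z ∈ Submodule.span ℝ S) (hw : w ∈ Submodule.span ℝ S) :
    ⟪z.2, w.1⟫ + ⟪z.1, w.2⟫ = 0 := by
  induction hz, hw using Submodule.span_induction₂ with
  | mem_mem z w hz hw => exact hS z hz w hw
  | zero_left | zero_right => simp
  | add_left x y z _ _ _ hx hy | add_right x y z _ _ _ hx hy =>
    simp only [Prod.fst_add, Prod.snd_add, inner_add_left, inner_add_right]
    linear_combination hx + hy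
  | smul_left r x y _ _ h | smul_right r x y _ _ h =>
    simp only [Prod.smul_fst, Prod.smul_snd, real_inner_smul_left, real_inner_smul_right]
    linear_combination r * h

lemma exists_isSkewAdjoint_eq_graph {G : Submodule ℝ (E × E)}
    (hG : ∀ z ∈ G, ∀ w ∈ G, ⟪z.2, w.1⟫ + ⟪z.1, w.2⟫ = 0)
    (hfst : G.map (LinearMap.fst ℝ E E) = ⊤) :
    ∃ Ω : E →ₗ[ℝ] E, (innerₗ E).IsSkewAdjoint Ω ∧ G = Ω.graph := by
  have hsurj (x : E) : ∃ y, (x, y) ∈ G := by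
    obtain ⟨⟨_, y⟩, hy, rfl⟩ := hfst.ge (Submodule.mem_top (x := x))
    exact ⟨y, hy⟩
  have hbij : Function.Bijective (Prod.fst ∘ G.subtype) := by
    constructor
    · rintro ⟨⟨x, y⟩, hz⟩ ⟨⟨x', y'⟩, hw⟩ (rfl : x = x')
      obtain ⟨u, hu⟩ := hsurj (y - y')
      simpa [sub_eq_zero] using hG _ (sub_mem hz hw) _ hu
    · intro x
      obtain ⟨y, hy⟩ := hsurj x
      exact ⟨⟨(x, y), hy⟩, rfl⟩
  obtain ⟨Ω, rfl⟩ := Submodule.exists_eq_graph hbij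
  refine ⟨Ω, fun x y => ?_, rfl⟩
  simpa [eq_neg_iff_add_eq_zero] using hG (x, Ω x) (by simp) (y, Ω y) (by simp)

lemma exists_isSkewAdjoint_of_inner_sub_eq_zero {t : Set E} (ht : vectorSpan ℝ t = ⊤) {g : E → E}
    (hg : ∀ a ∈ t, ∀ a' ∈ t, ⟪g a - g a', a - a'⟫ = 0) :
    ∃ Ω : E →ₗ[ℝ] E, (innerₗ E).IsSkewAdjoint Ω ∧
      ∀ a ∈ t, ∀ a' ∈ t, g a - g a' = Ω (a - a') := by
  let S : Set (E × E) := {z | ∃ a ∈ t, ∃ a' ∈ t, z = (a - a', g a - g a')}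
  have hS : ∀ z ∈ S, ∀ w ∈ S, ⟪z.2, w.1⟫ + ⟪z.1, w.2⟫ = 0 := by
    rintro _ ⟨a, ha, a', ha', rfl⟩ _ ⟨b, hb, b', hb', rfl⟩
    have hab := hg a ha b hb
    have hab' := hg a ha b' hb'
    have ha'b := hg a' ha' b hb
    have ha'b' := hg a' ha' b' hb'
    simp only [inner_sub_left, inner_sub_right, real_inner_comm _ (g _)] at *
    linear_combination hab' + ha'b - hab - ha'b'
  have hfst : (Submodule.span ℝ S).map (LinearMap.fst ℝ E E) = ⊤ := by
    rw [Submodule.map_span, eq_top_iff, ← ht]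
    refine Submodule.span_mono ?_
    rintro _ ⟨a, ha, a', ha', rfl⟩
    exact ⟨_, ⟨a, ha, a', ha', rfl⟩, rfl⟩
  obtain ⟨Ω, hskew, hgraph⟩ := exists_isSkewAdjoint_eq_graph
    (fun _ hz _ hw => inner_add_inner_eq_zero_of_mem_span hS hz hw) hfst
  refine ⟨Ω, hskew, fun a ha a' ha' => ?_⟩
  have : (a - a', g a - g a') ∈ Ω.graph := hgraph ▸ Submodule.subset_span ⟨a, ha, a', ha', rfl⟩
  exact (Ω.mem_graph_iff _).1 this

end Skew

section Combinatorics

variable {α β : Type*} [DecidableEq α] {P : Finset α} {m : ℕ}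

lemma eq_of_forall_swap_eq {f : Finset α → β}
    (h : ∀ ρ ⊆ P, ρ.card + 1 = m → ∀ b ∈ P \ ρ, ∀ b' ∈ P \ ρ, f (insert b ρ) = f (insert b' ρ))
    {r r' : Finset α} (hr : r ∈ P.powersetCard m) (hr' : r' ∈ P.powersetCard m) : f r = f r' := by
  induction hN : (r \ r').card generalizing r with
  | zero =>
    rw [Finset.mem_powersetCard] at hr hr'
    rw [Finset.card_eq_zero, Finset.sdiff_eq_empty_iff_subset] at hN
    rw [Finset.eq_of_subset_of_card_le hN (by omega)]
  | succ N ih =>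
    have hr₀ := Finset.mem_powersetCard.1 hr
    have hr₀' := Finset.mem_powersetCard.1 hr'
    have hcomm := Finset.card_sdiff_comm (hr₀.2.trans hr₀'.2.symm)
    obtain ⟨b, hb⟩ : (r \ r').Nonempty := Finset.card_pos.1 (by omega)
    obtain ⟨b', hb'⟩ : (r' \ r).Nonempty := Finset.card_pos.1 (by omega)
    rw [Finset.mem_sdiff] at hb hb'
    have hb'r : b' ∉ r.erase b := fun h => hb'.2 (Finset.mem_of_mem_erase h)
    have hsub : r.erase b ⊆ P := (Finset.erase_subset _ _).trans hr₀.1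
    have hcard : (r.erase b).card + 1 = m := by rw [Finset.card_erase_add_one hb.1, hr₀.2]
    have hswap := h _ hsub hcard b (by simp [hr₀.1 hb.1]) b' (by simp [hr₀'.1 hb'.1, hb'.2])
    rw [Finset.insert_erase hb.1] at hswap
    rw [hswap]
    refine ih (Finset.mem_powersetCard.2 ⟨Finset.insert_subset (hr₀'.1 hb'.1) hsub, ?_⟩) ?_
    · rw [Finset.card_insert_of_notMem hb'r, hcard]
    · rw [Finset.insert_sdiff_of_mem _ hb'.1, Finset.erase_sdiff_comm,
        Finset.card_erase_of_mem (Finset.mem_sdiff.2 hb), hN, Nat.add_sub_cancel]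

end Combinatorics

section GeneralPosition

variable {E : Type*} [AddCommGroup E] [Module ℝ E] {P : Finset E}

/-- A finite set of points is in general position if every subset that can be affinely independent
for reasons of cardinality is so. -/
def InGeneralPosition (P : Finset E) : Prop :=
  ∀ t ⊆ P, t.card ≤ Module.finrank ℝ E + 1 → AffineIndependent ℝ ((↑) : t → E)

lemma InGeneralPosition.mono {Q : Finset E} (hP : InGeneralPosition P) (hQ : Q ⊆ P) :
    InGeneralPosition Q :=
  fun t ht => hP t (ht.trans hQ)

lemma inGeneralPosition_of_affineIndependent (hP : AffineIndependent ℝ ((↑) : P → E)) :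
    InGeneralPosition P :=
  fun _ ht _ => hP.mono (Finset.coe_subset.2 ht)

lemma InGeneralPosition.vectorSpan_eq_top [FiniteDimensional ℝ E] (hP : InGeneralPosition P)
    (hcard : Module.finrank ℝ E + 1 ≤ P.card) : vectorSpan ℝ (P : Set E) = ⊤ := by
  obtain ⟨t, ht, htcard⟩ := Finset.exists_subset_card_eq hcard
  have hspan := (hP t ht htcard.le).vectorSpan_eq_top_of_card_eq_finrank_add_one (by simp [htcard])
  rw [Subtype.range_coe] at hspan
  exact top_unique (hspan.ge.trans (vectorSpan_mono ℝ (Finset.coe_subset.2 ht)))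

lemma InGeneralPosition.insert [DecidableEq E] (hP : InGeneralPosition P) {x : E}
    (hx : ∀ t ⊆ P, t.card ≤ Module.finrank ℝ E → x ∉ affineSpan ℝ (t : Set E)) :
    InGeneralPosition (insert x P) := by
  intro t ht hcard
  rw [Finset.subset_insert_iff] at ht
  by_cases hxt : x ∈ t
  · rw [← Finset.card_erase_add_one hxt, Nat.add_le_add_iff_right] at hcard
    have himage : (↑) '' {y : t | y ≠ ⟨x, hxt⟩} = (t.erase x : Set E) := by
      ext y
      simp [and_comm]
    let e : {y : t // y ≠ ⟨x, hxt⟩} ↪ t.erase x :=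
      ⟨fun y => ⟨y.1, Finset.mem_erase.2 ⟨fun h => y.2 (Subtype.ext h), y.1.2⟩⟩,
        fun y z h => Subtype.ext (Subtype.ext (by simpa using h))⟩
    refine AffineIndependent.affineIndependent_of_notMem_span (i := ⟨x, hxt⟩) ?_ ?_
    · exact (hP _ ht (by omega)).comp_embedding e
    · rw [himage]
      exact hx _ ht hcard
  · exact hP t (Finset.erase_eq_of_notMem hxt ▸ ht) hcard

lemma affineSpan_ne_top_of_card_le_finrank {t : Finset E} (ht : t.card ≤ Module.finrank ℝ E) :
    affineSpan ℝ (t : Set E) ≠ ⊤ := by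
  classical
  intro hspan
  rcases t.eq_empty_or_nonempty with rfl | ht₀
  · simp at hspan
  · have hpos := ht₀.card_pos
    have hle := finrank_vectorSpan_image_finset_le ℝ (id : E → E) t (n := t.card - 1) (by omega)
    rw [Finset.image_id, ← direction_affineSpan, hspan, AffineSubspace.direction_top,
      finrank_top] at hle
    omega

end GeneralPosition

section Extension

variable {E : Type*} [NormedAddCommGroup E] [NormedSpace ℝ E] [FiniteDimensional ℝ E]

lemma exists_forall_notMem_affineSubspace {ι : Type*} [Countable ι] {s : ι → AffineSubspace ℝ E}
    (hs : ∀ i, s i ≠ ⊤) : ∃ x, ∀ i, x ∉ s i := by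
  borelize E
  by_contra! hcover
  have hnull : (Measure.addHaar : Measure E) (⋃ i, (s i : Set E)) = 0 :=
    measure_iUnion_null fun i => Measure.addHaar_affineSubspace _ _ (hs i)
  rw [Set.iUnion_eq_univ_iff.2 hcover] at hnull
  exact NeZero.ne _ (Measure.measure_univ_eq_zero.1 hnull)

lemma exists_inGeneralPosition_union [DecidableEq E] [Nontrivial E] {P Q : Finset E}
    (hP : InGeneralPosition P) (hQ : InGeneralPosition Q) (N : ℕ) :
    ∃ G : Finset E, G.card = N ∧ InGeneralPosition (P ∪ G) ∧ InGeneralPosition (Q ∪ G) := by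
  induction N with
  | zero => exact ⟨∅, rfl, by simpa using hP, by simpa using hQ⟩
  | succ N ih =>
    obtain ⟨G, hG, hPG, hQG⟩ := ih
    obtain ⟨x, hx⟩ := exists_forall_notMem_affineSubspace
      (s := fun t : {t ∈ (P ∪ Q ∪ G).powerset | t.card ≤ Module.finrank ℝ E} =>
        affineSpan ℝ (t : Set E))
      fun t => affineSpan_ne_top_of_card_le_finrank (Finset.mem_filter.1 t.2).2
    have hx' (t : Finset E) (ht : t ⊆ P ∪ Q ∪ G) (hcard : t.card ≤ Module.finrank ℝ E) :
        x ∉ affineSpan ℝ (t : Set E) :=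
      hx ⟨t, Finset.mem_filter.2 ⟨Finset.mem_powerset.2 ht, hcard⟩⟩
    have hxG : x ∉ G := fun hxG => hx' {x} (by simp [hxG])
      (by simpa using Nat.one_le_iff_ne_zero.2 Module.finrank_pos.ne')
      (subset_affineSpan ℝ _ (by simp))
    refine ⟨insert x G, by rw [Finset.card_insert_of_notMem hxG, hG], ?_, ?_⟩
    · rw [Finset.union_insert]
      exact hPG.insert fun t ht => hx' t (ht.trans (by grind))
    · rw [Finset.union_insert]
      exact hQG.insert fun t ht => hx' t (ht.trans (by grind))

end Extension

section AffineInSum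

variable {E : Type*} [AddCommGroup E] [Module ℝ E] {P Q : Finset E} {m : ℕ} {v : Finset E → E}
  {Ω Ω' : E →ₗ[ℝ] E} {v₀ v₀' : E}

/-- On the `(m + 1)`-element subsets `s` of `P`, the vector `v s` is an affine function, with linear
part `Ω` and constant term `v₀`, of the sum of the points of `s`. For skew `Ω` these are the trivial
flexes in the sense of `IsFlex`. -/
def IsAffineInSum (m : ℕ) (P : Finset E) (v : Finset E → E) (Ω : E →ₗ[ℝ] E) (v₀ : E) : Prop :=
  ∀ s ⊆ P, s.card = m + 1 → v s = v₀ + Ω (∑ x ∈ s, x)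

lemma IsAffineInSum.mono (h : IsAffineInSum m Q v Ω v₀) (hP : P ⊆ Q) : IsAffineInSum m P v Ω v₀ :=
  fun s hs => h s (hs.trans hP)

lemma IsAffineInSum.sub_eq [DecidableEq E] (h : IsAffineInSum m P v Ω v₀) {r : Finset E}
    (hr : r ⊆ P) (hcard : r.card = m) {a a' : E} (ha : a ∈ P \ r) (ha' : a' ∈ P \ r) :
    v (insert a r) - v (insert a' r) = Ω (a - a') := by
  rw [Finset.mem_sdiff] at ha ha'
  rw [h _ (Finset.insert_subset ha.1 hr) (by rw [Finset.card_insert_of_notMem ha.2, hcard]),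
    h _ (Finset.insert_subset ha'.1 hr) (by rw [Finset.card_insert_of_notMem ha'.2, hcard]),
    Finset.sum_insert ha.2, Finset.sum_insert ha'.2, map_add, map_add, map_sub]
  abel

lemma IsAffineInSum.unique (hP : vectorSpan ℝ (P : Set E) = ⊤) (hcard : m + 2 ≤ P.card)
    (h : IsAffineInSum m P v Ω v₀) (h' : IsAffineInSum m P v Ω' v₀') : Ω = Ω' ∧ v₀ = v₀' := by
  classical
  have hΩ : Ω = Ω' := by
    refine linearMap_ext_of_vectorSpan_eq_top hP fun a ha a' ha' => ?_
    obtain ⟨r, hr, hrcard⟩ : ∃ r ⊆ P \ {a, a'}, r.card = m := by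
      refine Finset.exists_subset_card_eq ?_
      have := Finset.le_card_sdiff {a, a'} P
      have := Finset.card_le_two (a := a) (b := a')
      omega
    have hrP : r ⊆ P := hr.trans Finset.sdiff_subset
    have har : a ∈ P \ r := Finset.mem_sdiff.2 ⟨ha, fun h => by simpa using hr h⟩
    have har' : a' ∈ P \ r := Finset.mem_sdiff.2 ⟨ha', fun h => by simpa using hr h⟩
    rw [← h.sub_eq hrP hrcard har har', h'.sub_eq hrP hrcard har har']
  obtain ⟨s, hs, hscard⟩ : ∃ s ⊆ P, s.card = m + 1 := Finset.exists_subset_card_eq (by omega)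
  have := h s hs hscard
  rw [h' s hs hscard, hΩ] at this
  exact ⟨hΩ, (add_right_cancel this).symm⟩

end AffineInSum

section Rigidity

variable {E : Type*} [NormedAddCommGroup E] [InnerProductSpace ℝ E] [DecidableEq E]
  {P Q : Finset E} {m : ℕ} {v : Finset E → E}

/-- A vector `v s` is attached to each `(m + 1)`-element subset `s` of `P` in such a way that
exchanging a point `a` of `s` for `a'` changes it by a vector orthogonal to `a - a'`. For `m = 0`
these are the infinitesimal flexes of the complete bar framework on `P`. -/
def IsFlex (m : ℕ) (P : Finset E) (v : Finset E → E) : Prop :=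
  ∀ r ⊆ P, r.card = m → ∀ a ∈ P \ r, ∀ a' ∈ P \ r,
    ⟪v (insert a r) - v (insert a' r), a - a'⟫ = 0

variable [FiniteDimensional ℝ E]

lemma eq_of_symm_of_sub_eq_isSkewAdjoint {w : E → E → E} {M : E → E →ₗ[ℝ] E}
    (hQ : InGeneralPosition Q) (hcard : Module.finrank ℝ E + 5 ≤ Q.card)
    (hw : ∀ a b, w a b = w b a)
    (hM : ∀ b ∈ Q, (innerₗ E).IsSkewAdjoint (M b))
    (hwM : ∀ b ∈ Q, ∀ a ∈ Q.erase b, ∀ a' ∈ Q.erase b, w a b - w a' b = M b (a - a'))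
    {b b' : E} (hb : b ∈ Q) (hb' : b' ∈ Q) : M b = M b' := by
  have hsymm {b b' a a' : E} (hb : b ∈ Q) (hb' : b' ∈ Q) (ha : a ∈ Q \ {b, b'})
      (ha' : a' ∈ Q \ {b, b'}) : (M b - M b') (a - a') = (M a - M a') (b - b') := by
    simp only [Finset.mem_sdiff, Finset.mem_insert, Finset.mem_singleton, not_or] at ha ha'
    rw [LinearMap.sub_apply, LinearMap.sub_apply,
      ← hwM b hb a (by grind) a' (by grind), ← hwM b' hb' a (by grind) a' (by grind),
      ← hwM a ha.1 b (by grind) b' (by grind), ← hwM a' ha'.1 b (by grind) b' (by grind),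
      hw a b, hw a' b, hw a b', hw a' b']
    abel
  have hskew {b b' : E} (hb : b ∈ Q) (hb' : b' ∈ Q) (x y : E) :
      ⟪(M b - M b') x, y⟫ = -⟪(M b - M b') y, x⟫ := by
    rw [LinearMap.sub_apply, inner_sub_left, inner_map_left_of_isSkewAdjoint (hM b hb),
      inner_map_left_of_isSkewAdjoint (hM b' hb'), LinearMap.sub_apply, inner_sub_left,
      real_inner_comm x, real_inner_comm x]
    ring
  have hspan (r : Finset E) (hr : r.card ≤ 4) : vectorSpan ℝ ((Q \ r : Finset E) : Set E) = ⊤ :=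
    (hQ.mono Finset.sdiff_subset).vectorSpan_eq_top
      (by have := Finset.le_card_sdiff r Q; omega)
  refine linearMap_ext_of_vectorSpan_eq_top (hspan {b, b'} (Finset.card_le_two.trans (by omega)))
    fun a ha a' ha' => ?_
  rw [← sub_eq_zero, ← LinearMap.sub_apply]
  refine eq_zero_of_inner_sub_eq_zero (hspan {b, b', a, a'} Finset.card_le_four)
    fun c hc c' hc' => ?_
  simp only [Finset.coe_sdiff, Set.mem_sdiff, Finset.mem_coe, Finset.mem_insert,
    Finset.mem_singleton, not_or] at ha ha' hc hc'
  have hab := hsymm (b := b) (b' := b') (a := a) (a' := a') hb hb' (by grind) (by grind)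
  have hcb := hsymm (b := b) (b' := b') (a := c) (a' := c') hb hb' (by grind) (by grind)
  have hca := hsymm (b := a) (b' := a') (a := c) (a' := c') ha.1 ha'.1 (by grind) (by grind)
  -- A trilinear form that is symmetric in two of its arguments and skew in another two vanishes.
  have h₁ := hskew hb hb' (a - a') (c - c')
  have h₂ := hskew ha.1 ha'.1 (b - b') (c - c')
  have h₃ := hskew hc.1 hc'.1 (b - b') (a - a')
  rw [← hab] at h₂
  rw [← hcb, ← hca] at h₃
  linarith

lemma IsFlex.exists_sub_eq (hP : InGeneralPosition P) (hcard : m + Module.finrank ℝ E + 1 ≤ P.card)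
    (hv : IsFlex m P v) {r : Finset E} (hr : r ⊆ P) (hrcard : r.card = m) :
    ∃ Ω : E →ₗ[ℝ] E, (innerₗ E).IsSkewAdjoint Ω ∧
      ∀ a ∈ P \ r, ∀ a' ∈ P \ r, v (insert a r) - v (insert a' r) = Ω (a - a') := by
  have hcard' := Finset.card_sdiff_add_card_eq_card hr
  have hspan : vectorSpan ℝ ((P \ r : Finset E) : Set E) = ⊤ :=
    (hP.mono Finset.sdiff_subset).vectorSpan_eq_top (by omega)
  exact exists_isSkewAdjoint_of_inner_sub_eq_zero hspan (g := fun a => v (insert a r))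
    (hv r hr hrcard)

lemma IsFlex.exists_isAffineInSum (hP : InGeneralPosition P)
    (hcard : m + Module.finrank ℝ E + 4 ≤ P.card) (hv : IsFlex m P v) :
    ∃ (Ω : E →ₗ[ℝ] E) (v₀ : E), (innerₗ E).IsSkewAdjoint Ω ∧ IsAffineInSum m P v Ω v₀ := by
  choose! Om hskew hOm using fun r (hr : r ⊆ P ∧ r.card = m) =>
    hv.exists_sub_eq hP (by omega) hr.1 hr.2
  have hconst {r r' : Finset E} (hr : r ∈ P.powersetCard m) (hr' : r' ∈ P.powersetCard m) :
      Om r = Om r' := by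
    refine eq_of_forall_swap_eq (P := P) (m := m) (fun ρ hρ hρcard b hb b' hb' => ?_) hr hr'
    have hinsert (c : E) (hc : c ∈ P \ ρ) : insert c ρ ⊆ P ∧ (insert c ρ).card = m := by
      rw [Finset.mem_sdiff] at hc
      exact ⟨Finset.insert_subset hc.1 hρ, by rw [Finset.card_insert_of_notMem hc.2, hρcard]⟩
    have hcard' := Finset.card_sdiff_add_card_eq_card hρ
    exact eq_of_symm_of_sub_eq_isSkewAdjoint (Q := P \ ρ) (M := fun c => Om (insert c ρ))
      (w := fun a c => v (insert a (insert c ρ))) (hP.mono Finset.sdiff_subset) (by omega)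
      (fun a c => by rw [Finset.insert_comm]) (fun c hc => hskew _ (hinsert c hc))
      (fun c hc a ha a' ha' => hOm _ (hinsert c hc) a (by grind) a' (by grind)) hb hb'
  obtain ⟨r₀, hr₀⟩ : (P.powersetCard m).Nonempty := Finset.powersetCard_nonempty.2 (by omega)
  obtain ⟨s₀, hs₀⟩ : (P.powersetCard (m + 1)).Nonempty := Finset.powersetCard_nonempty.2 (by omega)
  refine ⟨Om r₀, v s₀ - Om r₀ (∑ x ∈ s₀, x), hskew _ (Finset.mem_powersetCard.1 hr₀),
    fun s hs hscard => ?_⟩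
  rw [← sub_eq_iff_eq_add]
  refine eq_of_forall_swap_eq (P := P) (m := m + 1) (f := fun s => v s - Om r₀ (∑ x ∈ s, x))
    (fun r hr hrcard a ha a' ha' => ?_) (Finset.mem_powersetCard.2 ⟨hs, hscard⟩) hs₀
  have hr' := Nat.add_right_cancel hrcard
  have hsub := hOm r ⟨hr, hr'⟩ a ha a' ha'
  rw [hconst (Finset.mem_powersetCard.2 ⟨hr, hr'⟩) hr₀, map_sub] at hsub
  rw [Finset.sum_insert (Finset.mem_sdiff.1 ha).2, Finset.sum_insert (Finset.mem_sdiff.1 ha').2,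
    map_add, map_add, sub_eq_iff_eq_add.1 hsub]
  abel

theorem exists_isAffineInSum_of_forall_isFlex
    (hv : ∀ P : Finset E, InGeneralPosition P → IsFlex m P v) :
    ∃ (Ω : E →ₗ[ℝ] E) (v₀ : E), (innerₗ E).IsSkewAdjoint Ω ∧
      ∀ P : Finset E, InGeneralPosition P → IsAffineInSum m P v Ω v₀ := by
  rcases subsingleton_or_nontrivial E with _ | _
  · exact ⟨0, 0, fun _ _ => by simp, fun _ _ _ _ _ => Subsingleton.elim _ _⟩
  have hempty : InGeneralPosition (∅ : Finset E) :=
    inGeneralPosition_of_affineIndependent (affineIndependent_of_subsingleton ℝ _)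
  obtain ⟨G, hGcard, hG, -⟩ :=
    exists_inGeneralPosition_union hempty hempty (m + Module.finrank ℝ E + 4)
  rw [Finset.empty_union] at hG
  obtain ⟨Ω, v₀, hΩ, hΩG⟩ := (hv G hG).exists_isAffineInSum hG hGcard.ge
  refine ⟨Ω, v₀, hΩ, fun P hP => ?_⟩
  obtain ⟨H, hHcard, hGH, hPH⟩ := exists_inGeneralPosition_union hG hP (m + Module.finrank ℝ E + 4)
  have hHG : H ⊆ G ∪ H := Finset.subset_union_right
  have hHP : H ⊆ P ∪ H := Finset.subset_union_right
  obtain ⟨Ω₁, v₁, -, hΩ₁⟩ := (hv _ hGH).exists_isAffineInSum hGH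
    (hHcard.ge.trans (Finset.card_le_card hHG))
  obtain ⟨Ω₂, v₂, -, hΩ₂⟩ := (hv _ hPH).exists_isAffineInSum hPH
    (hHcard.ge.trans (Finset.card_le_card hHP))
  obtain ⟨rfl, rfl⟩ := hΩG.unique (hG.vectorSpan_eq_top (by omega)) (by omega)
    (hΩ₁.mono Finset.subset_union_left)
  obtain ⟨rfl, rfl⟩ := (hΩ₁.mono hHG).unique
    ((hGH.mono hHG).vectorSpan_eq_top (by omega)) (by omega) (hΩ₂.mono hHP)
  exact hΩ₂.mono Finset.subset_union_left

end Rigidity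

section Measure

variable {E F : Type*} [NormedAddCommGroup E] [InnerProductSpace ℝ E]
  [NormedAddCommGroup F] [InnerProductSpace ℝ F]

lemma exists_affineIsometry_image_preimage_eq {C : Set E} (hC : C.Nonempty) :
    ∃ g : vectorSpan ℝ C →ᵃⁱ[ℝ] E,
      g.linear = (vectorSpan ℝ C).subtype ∧ g '' (g ⁻¹' C) = C := by
  obtain ⟨x, hx⟩ := hC
  refine ⟨(AffineIsometryEquiv.vaddConst ℝ x).toAffineIsometry.comp
    (vectorSpan ℝ C).subtypeₗᵢ.toAffineIsometry, rfl, ?_⟩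
  refine Set.image_preimage_eq_of_subset fun y hy => ?_
  exact ⟨⟨y - x, vsub_mem_vectorSpan ℝ hy hx⟩, sub_add_cancel y x⟩

lemma vectorSpan_convexHull (t : Set E) :
    vectorSpan ℝ (convexHull ℝ t) = vectorSpan ℝ t := by
  rw [← direction_affineSpan, affineSpan_convexHull, direction_affineSpan]

variable [FiniteDimensional ℝ E] [MeasurableSpace E] [BorelSpace E]
  [MeasurableSpace F] [BorelSpace F]

lemma hausdorffMeasure_image_linearMap_eq_normDet_mul (f : E →ₗ[ℝ] F) (C : Set E) :
    μH[Module.finrank ℝ (vectorSpan ℝ C)] (f '' C) =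
      ENNReal.ofReal (f ∘ₗ (vectorSpan ℝ C).subtype).normDet *
        μH[Module.finrank ℝ (vectorSpan ℝ C)] C := by
  rcases C.eq_empty_or_nonempty with rfl | hC
  · simp
  obtain ⟨g, hglin, hgC⟩ := exists_affineIsometry_image_preimage_eq hC
  have hfg : f '' C = (· + f (g 0)) '' ((f ∘ₗ (vectorSpan ℝ C).subtype) '' (g ⁻¹' C)) := by
    conv_lhs => rw [← hgC]
    simp only [Set.image_image]
    refine Set.image_congr fun w _ => ?_
    have hw : g w = w + g 0 := by
      have := g.toAffineMap.map_vadd 0 w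
      rwa [hglin, vadd_eq_add, vadd_eq_add, add_zero] at this
    simp [hw]
  have hC_eq : μH[Module.finrank ℝ (vectorSpan ℝ C)] C =
      μH[Module.finrank ℝ (vectorSpan ℝ C)] (g ⁻¹' C) := by
    rw [← g.isometry.hausdorffMeasure_image (.inl (Nat.cast_nonneg _)), hgC]
  have htranslate : Isometry (· + f (g 0)) := (IsometryEquiv.addRight (f (g 0))).isometry
  rw [hfg, htranslate.hausdorffMeasure_image (.inl (Nat.cast_nonneg _)),
    LinearMap.hausdorffMeasure_image, hC_eq]

lemma hausdorffMeasure_convexHull_pos {t : Set E} (ht : t.Finite) (ht₀ : t.Nonempty) :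
    0 < (μH[Module.finrank ℝ (vectorSpan ℝ t)] (convexHull ℝ t)).toReal := by
  obtain ⟨g, hglin, hgt⟩ := exists_affineIsometry_image_preimage_eq ht₀
  have hne : (g ⁻¹' t).Nonempty := Set.image_nonempty.1 (hgt.symm ▸ ht₀)
  have hspan : affineSpan ℝ (g ⁻¹' t) = ⊤ := by
    have hmap : (vectorSpan ℝ (g ⁻¹' t)).map (vectorSpan ℝ t).subtype = vectorSpan ℝ t := by
      rw [← hglin, g.toAffineMap.map_vectorSpan]
      exact congrArg (vectorSpan ℝ) hgt
    rw [AffineSubspace.affineSpan_eq_top_iff_vectorSpan_eq_top_of_nonempty ℝ _ _ hne]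
    exact (Submodule.map_injective_of_injective (vectorSpan ℝ t).injective_subtype)
      (hmap.trans (Submodule.map_subtype_top _).symm)
  have hconv : convexHull ℝ t = g '' convexHull ℝ (g ⁻¹' t) := by
    conv_lhs => rw [← hgt]
    exact (g.toAffineMap.image_convexHull _).symm
  rw [hconv, g.isometry.hausdorffMeasure_image (.inl (Nat.cast_nonneg _))]
  have hcompact : IsCompact (convexHull ℝ (g ⁻¹' t)) :=
    (ht.preimage g.injective.injOn).isCompact_convexHull (𝕜 := ℝ)
  have hinterior := interior_convexHull_nonempty_iff_affineSpan_eq_top.2 hspan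
  exact ENNReal.toReal_pos (Measure.measure_pos_of_nonempty_interior _ hinterior).ne'
    hcompact.measure_lt_top.ne

end Measure

section Projection

variable {E : Type*} [NormedAddCommGroup E] [InnerProductSpace ℝ E] [FiniteDimensional ℝ E]

lemma norm_mul_normDet_starProjection_orthogonal_singleton_comp_subtype (W : Submodule ℝ E)
    (u : E) :
    ‖u‖ * ((ℝ ∙ u)ᗮ.starProjection.toLinearMap ∘ₗ W.subtype).normDet = ‖Wᗮ.starProjection u‖ := by
  rcases eq_or_ne u 0 with rfl | hu
  · simp
  have hu' : ‖u‖ ≠ 0 := norm_ne_zero_iff.2 hu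
  set f := (ℝ ∙ u)ᗮ.starProjection.toLinearMap ∘ₗ W.subtype
  set w := W.orthogonalProjectionOnto u
  have hf (x : W) : f x = x - (⟪u, x⟫ / ‖u‖ ^ 2) • u := by
    simp [f, Submodule.starProjection_orthogonal, Submodule.starProjection_singleton]
  have hadjoint :
      f.adjoint ∘ₗ f = LinearMap.transvection (innerₗ W w) (-((‖u‖ ^ 2)⁻¹ • w)) := by
    refine LinearMap.ext fun x => ext_inner_right ℝ fun y => ?_
    have hw (z : W) : ⟪w, z⟫ = ⟪u, (z : E)⟫ := by
      simp [w]
    rw [LinearMap.comp_apply, LinearMap.adjoint_inner_left, LinearMap.transvection.apply, hf, hf]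
    simp only [inner_sub_left, inner_sub_right, real_inner_smul_left, real_inner_smul_right,
      real_inner_self_eq_norm_sq, innerₗ_apply_apply, hw, inner_add_left, smul_neg,
      inner_neg_left, real_inner_comm u, ← Submodule.coe_inner]
    field_simp
    ring
  have hdet : f.normDet ^ 2 = 1 - ‖w‖ ^ 2 / ‖u‖ ^ 2 := by
    have := f.normDet_sq
    rw [hadjoint, LinearMap.transvection.det, map_neg, map_smul, innerₗ_apply_apply,
      real_inner_self_eq_norm_sq, smul_eq_mul, inv_mul_eq_div, ← sub_eq_add_neg] at this
    exact this
  have hpythagoras : ‖u‖ ^ 2 = ‖w‖ ^ 2 + ‖Wᗮ.starProjection u‖ ^ 2 :=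
    W.norm_sq_eq_add_norm_sq_starProjection u
  refine (pow_left_inj₀ (mul_nonneg (norm_nonneg u) f.normDet_nonneg) (norm_nonneg _)
    two_ne_zero).1 ?_
  rw [mul_pow, hdet, ← sub_eq_of_eq_add' hpythagoras]
  field_simp

variable [MeasurableSpace E] [BorelSpace E]

lemma norm_mul_hausdorffMeasure_image_starProjection_orthogonal_singleton (u : E) (C : Set E) :
    ‖u‖ * (μH[Module.finrank ℝ (vectorSpan ℝ C)] ((ℝ ∙ u)ᗮ.starProjection '' C)).toReal =
      ‖(vectorSpan ℝ C)ᗮ.starProjection u‖ *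
        (μH[Module.finrank ℝ (vectorSpan ℝ C)] C).toReal := by
  rw [← norm_mul_normDet_starProjection_orthogonal_singleton_comp_subtype, mul_assoc]
  congr 1
  rw [← ENNReal.toReal_ofReal (LinearMap.normDet_nonneg _), ← ENNReal.toReal_mul]
  exact congrArg _ (hausdorffMeasure_image_linearMap_eq_normDet_mul _ C)

end Projection

section Conormal

variable {E : Type*} [NormedAddCommGroup E] [InnerProductSpace ℝ E]

lemma exists_unit_mem_forall_inner_eq_zero_and_inner_neg {V W : Submodule ℝ E}
    [W.HasOrthogonalProjection] (hWV : W ≤ V) {x : E} (hxV : x ∈ V) (hxW : x ∉ W) :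
    ∃ v ∈ V, ‖v‖ = 1 ∧ (∀ w ∈ W, ⟪v, w⟫ = 0) ∧ ⟪v, x⟫ < 0 := by
  set y := x - W.starProjection x
  have hyW : ∀ w ∈ W, ⟪y, w⟫ = 0 := fun w hw => W.starProjection_inner_eq_zero x w hw
  have hy₀ : 0 < ‖y‖ := norm_pos_iff.2 fun h =>
    hxW (sub_eq_zero.1 h ▸ W.starProjection_apply_mem x)
  have hyx : ⟪y, x⟫ = ‖y‖ ^ 2 := by
    rw [← real_inner_self_eq_norm_sq]
    conv_rhs => rw [inner_sub_right, hyW _ (W.starProjection_apply_mem x), sub_zero]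
  refine ⟨-(‖y‖⁻¹ • y), ?_, ?_, fun w hw => ?_, ?_⟩
  · exact V.neg_mem (V.smul_mem _ (V.sub_mem hxV (hWV (W.starProjection_apply_mem x))))
  · rw [norm_neg, norm_smul, norm_inv, norm_norm, inv_mul_cancel₀ hy₀.ne']
  · rw [inner_neg_left, real_inner_smul_left, hyW w hw, mul_zero, neg_zero]
  · rw [inner_neg_left, real_inner_smul_left, hyx, neg_lt_zero]
    positivity

variable {n K : ℕ} {b : Fin K → Euc n} {p q : Fin K} {v x : Euc n}

lemma range_face (b : Fin K → Euc n) (p : Fin K) : Set.range (face b p) = b '' {p}ᶜ := by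
  ext x
  simp [face]

lemma vectorSpan_face_le (b : Fin K → Euc n) (p : Fin K) :
    vectorSpan ℝ (Set.range (face b p)) ≤ vectorSpan ℝ (Set.range b) :=
  vectorSpan_mono ℝ (range_face b p ▸ Set.image_subset_range _ _)

lemma sub_bary_mem_vectorSpan {ι : Type*} [Fintype ι] (c : ι → Euc n) (j : ι) :
    c j - bary c ∈ vectorSpan ℝ (Set.range c) := by
  have hcard : (Fintype.card ι : ℝ) ≠ 0 :=
    Nat.cast_ne_zero.2 (Fintype.card_pos_iff.2 ⟨j⟩).ne'
  have hmean : c j - bary c = (Fintype.card ι : ℝ)⁻¹ • ∑ i, (c j - c i) := by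
    rw [Finset.sum_sub_distrib, smul_sub, bary, Finset.sum_const, Finset.card_univ,
      ← Nat.cast_smul_eq_nsmul ℝ, smul_smul, inv_mul_cancel₀ hcard, one_smul]
  rw [hmean]
  exact Submodule.smul_mem _ _ (Submodule.sum_mem _ fun i _ =>
    vsub_mem_vectorSpan ℝ (Set.mem_range_self j) (Set.mem_range_self i))

lemma sub_mem_vectorSpan_face {i j : Fin K} (hi : i ≠ p) (hj : j ≠ p) :
    b i - b j ∈ vectorSpan ℝ (Set.range (face b p)) :=
  vsub_mem_vectorSpan ℝ ⟨⟨i, hi⟩, rfl⟩ ⟨⟨j, hj⟩, rfl⟩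

lemma sub_bary_face_notMem_vectorSpan_face (hb : AffineIndependent ℝ b) (hqp : q ≠ p) :
    b p - bary (face b p) ∉ vectorSpan ℝ (Set.range (face b p)) := by
  intro h
  have hq : b q - bary (face b p) ∈ vectorSpan ℝ (Set.range (face b p)) :=
    sub_bary_mem_vectorSpan (face b p) ⟨q, hqp⟩
  have hpq := Submodule.sub_mem _ h hq
  rw [sub_sub_sub_cancel_right, ← direction_affineSpan] at hpq
  refine hb.notMem_affineSpan_sdiff p Set.univ ?_
  rw [← Set.compl_eq_univ_sdiff, ← range_face, ← sub_add_cancel (b p) (b q)]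
  exact AffineSubspace.vadd_mem_of_mem_direction hpq (subset_affineSpan ℝ _ ⟨⟨q, hqp⟩, rfl⟩)

lemma isConormal_conormal (hb : AffineIndependent ℝ b) (hqp : q ≠ p) :
    IsConormal b p (conormal b p) := by
  have hmem : b p - bary (face b p) ∈ vectorSpan ℝ (Set.range b) := by
    rw [← sub_add_sub_cancel (b p) (b q)]
    exact Submodule.add_mem _ (vsub_mem_vectorSpan ℝ (Set.mem_range_self p) (Set.mem_range_self q))
      (vectorSpan_face_le b p (sub_bary_mem_vectorSpan (face b p) ⟨q, hqp⟩))
  have hex : ∃ v, IsConormal b p v := exists_unit_mem_forall_inner_eq_zero_and_inner_neg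
    (vectorSpan_face_le b p) hmem (sub_bary_face_notMem_vectorSpan_face hb hqp)
  rw [conormal, dif_pos hex]
  exact hex.choose_spec

lemma IsConormal.inner_sub_eq_zero (h : IsConormal b p v) {i j : Fin K} (hi : i ≠ p)
    (hj : j ≠ p) : ⟪v, b i - b j⟫ = 0 :=
  h.2.2.1 _ (sub_mem_vectorSpan_face hi hj)

lemma IsConormal.inner_sub_neg (h : IsConormal b p v) (hqp : q ≠ p) : ⟪v, b p - b q⟫ < 0 := by
  have hq : ⟪v, b q - bary (face b p)⟫ = 0 :=
    h.2.2.1 _ (sub_bary_mem_vectorSpan (face b p) ⟨q, hqp⟩)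
  rw [← sub_sub_sub_cancel_right (b p) (b q) (bary (face b p)), inner_sub_right, hq, sub_zero]
  exact h.2.2.2

lemma IsConormal.mem_vectorSpan_face (h : IsConormal b p v) (hqp : q ≠ p)
    (hx : x ∈ vectorSpan ℝ (Set.range b)) (hvx : ⟪v, x⟫ = 0) :
    x ∈ vectorSpan ℝ (Set.range (face b p)) := by
  have hle : vectorSpan ℝ (Set.range b) ≤
      vectorSpan ℝ (Set.range (face b p)) ⊔ (ℝ ∙ (b p - b q)) := by
    rw [vectorSpan_range_eq_span_range_vsub_right ℝ b q, Submodule.span_le]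
    rintro _ ⟨i, rfl⟩
    rcases eq_or_ne i p with rfl | hi
    · exact Submodule.mem_sup_right (Submodule.mem_span_singleton_self _)
    · exact Submodule.mem_sup_left (sub_mem_vectorSpan_face hi hqp)
  obtain ⟨w, hw, y, hy, rfl⟩ := Submodule.mem_sup.1 (hle hx)
  obtain ⟨t, rfl⟩ := Submodule.mem_span_singleton.1 hy
  rw [inner_add_right, h.2.2.1 w hw, zero_add, real_inner_smul_right] at hvx
  rw [(mul_eq_zero.1 hvx).resolve_right (h.inner_sub_neg hqp).ne, zero_smul, add_zero]
  exact hw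

lemma IsConormal.norm_starProjection_orthogonal_face (h : IsConormal b p v) (hqp : q ≠ p)
    (hx : x ∈ vectorSpan ℝ (Set.range b)) :
    ‖(vectorSpan ℝ (Set.range (face b p)))ᗮ.starProjection x‖ = |⟪v, x⟫| := by
  have hrem : x - ⟪v, x⟫ • v ∈ vectorSpan ℝ (Set.range (face b p)) := by
    refine h.mem_vectorSpan_face hqp (Submodule.sub_mem _ hx (Submodule.smul_mem _ _ h.1)) ?_
    rw [inner_sub_right, real_inner_smul_right, real_inner_self_eq_norm_sq, h.2.1]
    ring
  have hproj : (vectorSpan ℝ (Set.range (face b p)))ᗮ.starProjection x = ⟪v, x⟫ • v := by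
    refine Submodule.eq_starProjection_of_mem_of_inner_eq_zero
      (Submodule.smul_mem _ _ ((Submodule.mem_orthogonal' _ _).2 h.2.2.1)) fun w hw => ?_
    exact (Submodule.mem_orthogonal _ _).1 hw _ hrem
  rw [hproj, norm_smul, h.2.1, mul_one, Real.norm_eq_abs]

end Conormal

section FaceMeasure

variable {n K : ℕ} {b : Fin K → Euc n} {p q : Fin K}

lemma natCast_finrank_vectorSpan_range {ι : Type*} [Fintype ι] [Nonempty ι] {c : ι → Euc n}
    (hc : AffineIndependent ℝ c) :
    (Module.finrank ℝ (vectorSpan ℝ (Set.range c)) : ℝ) = Fintype.card ι - 1 := by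
  rw [← hc.finrank_vectorSpan_add_one]
  simp

lemma hausdorffMeasure_simplexSet_pos {ι : Type*} [Fintype ι] [Nonempty ι] {c : ι → Euc n}
    (hc : AffineIndependent ℝ c) :
    0 < (μH[(Fintype.card ι : ℝ) - 1] (simplexSet c)).toReal := by
  rw [← natCast_finrank_vectorSpan_range hc]
  exact hausdorffMeasure_convexHull_pos (Set.finite_range c) (Set.range_nonempty c)

lemma natCast_card_ne_sub_one (p : Fin K) :
    (Fintype.card {j : Fin K // j ≠ p} : ℝ) - 1 = K - 2 := by
  have hK : 1 ≤ K := p.pos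
  rw [Fintype.card_subtype_compl, Fintype.card_fin, Fintype.card_subtype_eq, Nat.cast_sub hK]
  norm_num [sub_sub]

lemma affineIndependent_face (hb : AffineIndependent ℝ b) (p : Fin K) :
    AffineIndependent ℝ (face b p) :=
  hb.subtype {j | j ≠ p}

lemma natCast_finrank_vectorSpan_face (hb : AffineIndependent ℝ b) (hqp : q ≠ p) :
    (Module.finrank ℝ (vectorSpan ℝ (Set.range (face b p))) : ℝ) = K - 2 := by
  have : Nonempty {j // j ≠ p} := ⟨⟨q, hqp⟩⟩
  rw [natCast_finrank_vectorSpan_range (affineIndependent_face hb p), natCast_card_ne_sub_one]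

lemma hausdorffMeasure_simplexSet_face_pos (hb : AffineIndependent ℝ b) (hqp : q ≠ p) :
    0 < (μH[(K : ℝ) - 2] (simplexSet (face b p))).toReal := by
  have : Nonempty {j // j ≠ p} := ⟨⟨q, hqp⟩⟩
  rw [← natCast_card_ne_sub_one p]
  exact hausdorffMeasure_simplexSet_pos (affineIndependent_face hb p)

lemma image_simplexSet_face_subset {f : Euc n →ₗ[ℝ] Euc n} (hf : f (b p) = f (b q))
    (hqp : q ≠ p) : f '' simplexSet (face b p) ⊆ f '' simplexSet (face b q) := by
  rw [simplexSet, simplexSet, f.image_convexHull, f.image_convexHull]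
  refine convexHull_mono ?_
  rintro _ ⟨_, ⟨⟨j, hj⟩, rfl⟩, rfl⟩
  rcases eq_or_ne j q with rfl | hjq
  · exact ⟨b p, ⟨⟨p, hqp.symm⟩, rfl⟩, hf⟩
  · exact ⟨b j, ⟨⟨j, hjq⟩, rfl⟩, rfl⟩

lemma norm_mul_hausdorffMeasure_image_simplexSet_face (hb : AffineIndependent ℝ b) (hqp : q ≠ p)
    {u : Euc n} (hu : u ∈ vectorSpan ℝ (Set.range b)) :
    ‖u‖ * (μH[(K : ℝ) - 2] ((ℝ ∙ u)ᗮ.starProjection '' simplexSet (face b p))).toReal =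
      |⟪conormal b p, u⟫| * (μH[(K : ℝ) - 2] (simplexSet (face b p))).toReal := by
  have := norm_mul_hausdorffMeasure_image_starProjection_orthogonal_singleton u
    (simplexSet (face b p))
  rwa [simplexSet, vectorSpan_convexHull, natCast_finrank_vectorSpan_face hb hqp,
    (isConormal_conormal hb hqp).norm_starProjection_orthogonal_face hqp hu] at this

lemma hausdorffMeasure_face_mul_inner_conormal_add_eq_zero (hb : AffineIndependent ℝ b)
    (hqp : q ≠ p) :
    (μH[(K : ℝ) - 2] (simplexSet (face b p))).toReal * ⟪conormal b p, b p - b q⟫ +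
      (μH[(K : ℝ) - 2] (simplexSet (face b q))).toReal * ⟪conormal b q, b p - b q⟫ = 0 := by
  have hu : b p - b q ∈ vectorSpan ℝ (Set.range b) :=
    vsub_mem_vectorSpan ℝ (Set.mem_range_self p) (Set.mem_range_self q)
  -- Projecting along the edge from `b q` to `b p` identifies the two faces opposite its endpoints.
  set π := (ℝ ∙ (b p - b q))ᗮ.starProjection
  have hπ : π (b p) = π (b q) := by
    rw [← sub_eq_zero, ← map_sub]
    exact Submodule.starProjection_orthogonalComplement_singleton_eq_zero _
  have himage : π '' simplexSet (face b p) = π '' simplexSet (face b q) :=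
    (image_simplexSet_face_subset (f := π.toLinearMap) hπ hqp).antisymm
      (image_simplexSet_face_subset (f := π.toLinearMap) hπ.symm hqp.symm)
  have hp := norm_mul_hausdorffMeasure_image_simplexSet_face hb hqp hu
  have hq := norm_mul_hausdorffMeasure_image_simplexSet_face hb hqp.symm hu
  have hp_neg := (isConormal_conormal hb hqp).inner_sub_neg hqp
  have hq_neg := (isConormal_conormal hb hqp.symm).inner_sub_neg hqp.symm
  rw [← neg_sub, inner_neg_right, neg_lt_zero] at hq_neg
  rw [abs_of_neg hp_neg] at hp
  rw [abs_of_pos hq_neg] at hq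
  rw [himage] at hp
  linear_combination hp - hq

end FaceMeasure

section Loads

variable {n K : ℕ}

/-- The vector force `f` spread uniformly over the set `C`, as a set function: it has constant
density on `C` and total value `f`. It is the junk value `0` when `C` has zero or infinite
`d`-dimensional measure. -/
def uniformLoad (d : ℝ) (C : Set (Euc n)) : Euc n →ₗ[ℝ] Set (Euc n) → Euc n where
  toFun f S := ((μH[d] (S ∩ C)).toReal / (μH[d] C).toReal) • f
  map_add' f g := funext fun _ => smul_add _ f g
  map_smul' c f := funext fun _ => smul_comm _ c f

lemma uniformLoad_apply (d : ℝ) (C : Set (Euc n)) (f : Euc n) (S : Set (Euc n)) :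
    uniformLoad d C f S = ((μH[d] (S ∩ C)).toReal / (μH[d] C).toReal) • f :=
  rfl

lemma sys_eq_sum_smul_uniformLoad {ι : Type*} {l : ℕ} {d : ℝ} {s : Fin l → ι → Euc n}
    (hs : ∀ i, (μH[d] (simplexSet (s i))).toReal ≠ 0) (F : Fin l → Euc n) :
    sys d s F =
      ∑ i, (μH[d] (simplexSet (s i))).toReal • uniformLoad d (simplexSet (s i)) (F i) := by
  funext S
  rw [sys, Finset.sum_apply]
  refine Finset.sum_congr rfl fun i _ => ?_
  rw [Pi.smul_apply, uniformLoad_apply, smul_smul, mul_div_cancel₀ _ (hs i)]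

lemma matVec_rankOne (u v : Euc n) : matVec (rankOne u) v = ⟪v, u⟫ • u := by
  have hrank : rankOne u = vecMulVec u.ofLp u.ofLp := rfl
  ext i
  simp [matVec, hrank, vecMulVec_mulVec, EuclideanSpace.inner_eq_star_dotProduct, mul_comm]

lemma matVec_smul (c : ℝ) (A : Matrix (Fin n) (Fin n) ℝ) (v : Euc n) :
    matVec (c • A) v = c • matVec A v := by
  simp [matVec]

lemma beam_smul (c : ℝ) (A : Matrix (Fin n) (Fin n) ℝ) (b : Fin K → Euc n) :
    beam (c • A) b = c • beam A b := by
  funext S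
  simp only [beam, matVec_smul, Pi.smul_apply, Finset.smul_sum]
  exact Finset.sum_congr rfl fun i _ => smul_comm _ _ _

/-- The linear space of the set functions that are finite sums of beams over simplices with `K`
vertices; it is linear because the matrix of a beam may be rescaled by any real number. -/
def beamSums (n K : ℕ) : Submodule ℝ (Set (Euc n) → Euc n) where
  carrier := {G | IsBeamSum K G}
  zero_mem' := ⟨0, Fin.elim0, Fin.elim0, fun j => j.elim0, fun j => j.elim0, fun j => j.elim0,
    funext fun _ => by simp⟩
  add_mem' := by
    rintro _ _ ⟨m, τ, A, hτ, hA, hAτ, rfl⟩ ⟨m', τ', A', hτ', hA', hAτ', rfl⟩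
    refine ⟨m + m', Fin.append τ τ', Fin.append A A', ?_, ?_, ?_,
      funext fun S => by simp [Fin.sum_univ_add]⟩
    · exact fun j => Fin.addCases (by simpa using hτ) (by simpa using hτ') j
    · exact fun j => Fin.addCases (by simpa using hA) (by simpa using hA') j
    · exact fun j => Fin.addCases (by simpa using hAτ) (by simpa using hAτ') j
  smul_mem' := by
    rintro c _ ⟨m, τ, A, hτ, hA, hAτ, rfl⟩
    refine ⟨m, τ, fun j => c • A j, hτ, fun j => (hA j).smul c, fun j v => ?_,
      funext fun S => by simp [beam_smul, Finset.smul_sum]⟩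
    rw [matVec_smul]
    exact Submodule.smul_mem _ _ (hAτ j v)

variable {A : Matrix (Fin n) (Fin n) ℝ} {b : Fin K → Euc n} {p q : Fin K}

lemma beam_mem_beamSums (hb : AffineIndependent ℝ b) (hA : A.IsSymm) (hAb : Structural A b) :
    beam A b ∈ beamSums n K :=
  ⟨1, fun _ => b, fun _ => A, fun _ => hb, fun _ => hA, fun _ => hAb, funext fun _ => by simp⟩

lemma isSymm_rankOne (u : Euc n) : (rankOne u).IsSymm :=
  Matrix.IsSymm.ext fun _ _ => mul_comm _ _

lemma structural_rankOne {u : Euc n} (hu : u ∈ vectorSpan ℝ (Set.range b)) :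
    Structural (rankOne u) b := fun v => by
  rw [matVec_rankOne]
  exact Submodule.smul_mem _ _ hu

lemma beam_rankOne_sub_apply (hb : AffineIndependent ℝ b) (hqp : q ≠ p) (S : Set (Euc n)) :
    beam (rankOne (b p - b q)) b S =
      ((μH[(K : ℝ) - 2] (S ∩ simplexSet (face b p))).toReal * ⟪conormal b p, b p - b q⟫ +
        (μH[(K : ℝ) - 2] (S ∩ simplexSet (face b q))).toReal * ⟪conormal b q, b p - b q⟫) •
          (b p - b q) := by
  rw [beam, Finset.sum_eq_add p q hqp.symm (fun i _ hi => ?_) (by simp) (by simp)]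
  · rw [matVec_rankOne, matVec_rankOne, smul_smul, smul_smul, add_smul]
  · rw [matVec_rankOne,
      (isConormal_conormal hb hi.1.symm).inner_sub_eq_zero hi.1.symm hi.2.symm, zero_smul,
      smul_zero]

lemma beam_rankOne_sub (hb : AffineIndependent ℝ b) (hqp : q ≠ p) :
    beam (rankOne (b p - b q)) b =
      ((μH[(K : ℝ) - 2] (simplexSet (face b q))).toReal * ⟪conormal b q, b p - b q⟫) •
        (uniformLoad (K - 2) (simplexSet (face b q)) (b p - b q) -
          uniformLoad (K - 2) (simplexSet (face b p)) (b p - b q)) := by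
  have hbalance := hausdorffMeasure_face_mul_inner_conormal_add_eq_zero hb hqp
  have hp := (hausdorffMeasure_simplexSet_face_pos hb hqp).ne'
  have hq := (hausdorffMeasure_simplexSet_face_pos hb hqp.symm).ne'
  funext S
  rw [beam_rankOne_sub_apply hb hqp, Pi.smul_apply, Pi.sub_apply, uniformLoad_apply,
    uniformLoad_apply, ← sub_smul, smul_smul]
  congr 1
  field_simp
  linear_combination (μH[(K : ℝ) - 2] (S ∩ simplexSet (face b p))).toReal * hbalance

lemma uniformLoad_sub_uniformLoad_mem_beamSums (hb : AffineIndependent ℝ b) (p q : Fin K) :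
    uniformLoad (K - 2) (simplexSet (face b q)) (b p - b q) -
      uniformLoad (K - 2) (simplexSet (face b p)) (b p - b q) ∈ beamSums n K := by
  rcases eq_or_ne q p with rfl | hqp
  · simp
  have hneg := (isConormal_conormal hb hqp.symm).inner_sub_neg hqp.symm
  rw [← neg_sub, inner_neg_right, neg_lt_zero] at hneg
  have hcoef := mul_ne_zero (hausdorffMeasure_simplexSet_face_pos hb hqp.symm).ne' hneg.ne'
  rw [← Submodule.smul_mem_iff _ hcoef, ← beam_rankOne_sub hb hqp]
  exact beam_mem_beamSums hb (isSymm_rankOne _) (structural_rankOne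
    (vsub_mem_vectorSpan ℝ (Set.mem_range_self p) (Set.mem_range_self q)))

lemma uniformLoad_erase_sub_uniformLoad_erase_mem_beamSums [DecidableEq (Euc n)]
    {T : Finset (Euc n)} (hT : AffineIndependent ℝ ((↑) : T → Euc n)) {a a' : Euc n} (ha : a ∈ T)
    (ha' : a' ∈ T) :
    uniformLoad (T.card - 2) (convexHull ℝ ↑(T.erase a')) (a - a') -
      uniformLoad (T.card - 2) (convexHull ℝ ↑(T.erase a)) (a - a') ∈ beamSums n T.card := by
  let b : Fin T.card → Euc n := fun i => T.equivFin.symm i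
  have hb : AffineIndependent ℝ b := hT.comp_embedding T.equivFin.symm.toEmbedding
  have hrange : Set.range b = T :=
    (T.equivFin.symm.surjective.range_comp Subtype.val).trans Subtype.range_coe
  have hface (x : T) : simplexSet (face b (T.equivFin x)) = convexHull ℝ ↑(T.erase x) := by
    have hx : b (T.equivFin x) = x := by simp [b]
    rw [simplexSet, range_face, Set.compl_eq_univ_sdiff, Set.image_sdiff hb.injective,
      Set.image_univ, hrange, Set.image_singleton, hx, Finset.coe_erase]
  simpa [hface, b] using
    uniformLoad_sub_uniformLoad_mem_beamSums hb (T.equivFin ⟨a, ha⟩) (T.equivFin ⟨a', ha'⟩)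

end Loads

section Equilibrium

variable {n l : ℕ}

lemma trace_toMatrix_mul_wedge {Ω : Euc n →ₗ[ℝ] Euc n} (hΩ : (innerₗ (Euc n)).IsSkewAdjoint Ω)
    (x y : Euc n) : (toEuclideanLin.symm Ω * wedge x y).trace = 2 * ⟪Ω x, y⟫ := by
  have hwedge : wedge x y = vecMulVec x.ofLp y.ofLp - vecMulVec y.ofLp x.ofLp := rfl
  have htrace (u v : Euc n) :
      (toEuclideanLin.symm Ω * vecMulVec u.ofLp v.ofLp).trace = ⟪Ω u, v⟫ := by
    obtain ⟨M, rfl⟩ := toEuclideanLin.surjective Ω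
    rw [LinearEquiv.symm_apply_apply, mul_vecMulVec, trace_vecMulVec, dotProduct_comm,
      EuclideanSpace.inner_eq_star_dotProduct]
    simp
  rw [hwedge, Matrix.mul_sub, trace_sub, htrace, htrace, inner_map_left_of_isSkewAdjoint hΩ y,
    real_inner_comm y]
  ring

lemma sum_mul_inner_map_eq_zero_of_sum_smul_wedge_eq_zero {ι : Type*} [Fintype ι]
    {Ω : Euc n →ₗ[ℝ] Euc n} (hΩ : (innerₗ (Euc n)).IsSkewAdjoint Ω) {h : ι → ℝ} {c F : ι → Euc n}
    (hw : ∑ i, h i • wedge (c i) (F i) = 0) : ∑ i, h i * ⟪Ω (c i), F i⟫ = 0 := by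
  have htrace := congr((toEuclideanLin.symm Ω * $hw).trace)
  simp only [Matrix.mul_sum, Matrix.mul_smul, trace_sum, trace_smul,
    trace_toMatrix_mul_wedge hΩ, smul_eq_mul, mul_zero, trace_zero, mul_left_comm _ (2 : ℝ),
    ← Finset.mul_sum] at htrace
  simpa using htrace

lemma equil.sum_mul_inner_add_map_bary_eq_zero {ι : Type*} [Fintype ι] {d : ℝ}
    {s : Fin l → ι → Euc n} {F : Fin l → Euc n} (hF : equil d s F) {Ω : Euc n →ₗ[ℝ] Euc n}
    (hΩ : (innerₗ (Euc n)).IsSkewAdjoint Ω) (v₀ : Euc n) (c : ℝ) :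
    ∑ i, (μH[d] (simplexSet (s i))).toReal * ⟪v₀ + Ω (c • bary (s i)), F i⟫ = 0 := by
  have hforce := congr(⟪v₀, $(hF.1)⟫)
  have htorque := sum_mul_inner_map_eq_zero_of_sum_smul_wedge_eq_zero hΩ hF.2
  simp only [inner_sum, real_inner_smul_right, inner_zero_right] at hforce
  simp only [map_smul, inner_add_left, real_inner_smul_left, mul_add, Finset.sum_add_distrib,
    mul_left_comm _ c, ← Finset.mul_sum, hforce, htorque, mul_zero, add_zero]

lemma sum_eq_card_smul_bary {ι : Type*} [Fintype ι] (c : ι → Euc n) :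
    ∑ i, c i = (Fintype.card ι : ℝ) • bary c := by
  rcases isEmpty_or_nonempty ι with _ | _
  · simp
  · rw [bary, smul_inv_smul₀ (Nat.cast_ne_zero.2 Fintype.card_ne_zero)]

end Equilibrium

section Duality

variable {n m : ℕ} {φ : (Set (Euc n) → Euc n) →ₗ[ℝ] ℝ}

lemma isFlex_of_beamSums_le_ker [DecidableEq (Euc n)] (hm : m + 1 ≤ n)
    (hφ : beamSums n (m + 2) ≤ LinearMap.ker φ) {v : Finset (Euc n) → Euc n}
    (hv : ∀ t f, ⟪v t, f⟫ = φ (uniformLoad m (convexHull ℝ t) f)) {P : Finset (Euc n)}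
    (hP : InGeneralPosition P) : IsFlex m P v := by
  intro r hr hrcard a ha a' ha'
  rcases eq_or_ne a a' with rfl | hne
  · simp
  rw [Finset.mem_sdiff] at ha ha'
  have hcard : (insert a (insert a' r)).card = m + 2 := by
    rw [Finset.card_insert_of_notMem (by simp [hne, ha.2]), Finset.card_insert_of_notMem ha'.2,
      hrcard]
  have herase : (insert a (insert a' r)).erase a = insert a' r :=
    Finset.erase_insert (by simp [hne, ha.2])
  have herase' : (insert a (insert a' r)).erase a' = insert a r := by
    rw [Finset.insert_comm, Finset.erase_insert (by simp [hne.symm, ha'.2])]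
  have hmem := uniformLoad_erase_sub_uniformLoad_erase_mem_beamSums
    (hP _ (Finset.insert_subset ha.1 (Finset.insert_subset ha'.1 hr))
      (by rw [hcard, finrank_euclideanSpace_fin]; omega))
    (a := a) (a' := a') (by simp) (by simp)
  rw [herase, herase', hcard, Nat.cast_add, Nat.cast_ofNat, add_sub_cancel_right] at hmem
  rw [inner_sub_left, hv, hv, ← map_sub]
  exact hφ hmem

lemma exists_forall_uniformLoad_eq_inner_of_beamSums_le_ker (hm : m + 1 ≤ n)
    (hφ : beamSums n (m + 2) ≤ LinearMap.ker φ) :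
    ∃ (Ω : Euc n →ₗ[ℝ] Euc n) (v₀ : Euc n), (innerₗ (Euc n)).IsSkewAdjoint Ω ∧
      ∀ s : Fin (m + 1) → Euc n, AffineIndependent ℝ s → ∀ f,
        φ (uniformLoad m (simplexSet s) f) = ⟪v₀ + Ω ((m + 1 : ℝ) • bary s), f⟫ := by
  classical
  let v : Finset (Euc n) → Euc n := fun t => (InnerProductSpace.toDual ℝ (Euc n)).symm
    (LinearMap.toContinuousLinearMap (φ ∘ₗ uniformLoad m (convexHull ℝ t)))
  have hv (t : Finset (Euc n)) (f : Euc n) :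
      ⟪v t, f⟫ = φ (uniformLoad m (convexHull ℝ t) f) :=
    InnerProductSpace.toDual_symm_apply
  obtain ⟨Ω, v₀, hΩ, hΩv⟩ := exists_isAffineInSum_of_forall_isFlex fun P hP =>
    isFlex_of_beamSums_le_ker hm hφ hv hP
  refine ⟨Ω, v₀, hΩ, fun s hs f => ?_⟩
  have hrange : ((Finset.univ.image s : Finset (Euc n)) : Set (Euc n)) = Set.range s := by simp
  have hind : AffineIndependent ℝ ((↑) : ↥(Finset.univ.image s) → Euc n) :=
    hs.range.mono hrange.le
  have hcard : (Finset.univ.image s).card = m + 1 := by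
    rw [Finset.card_image_of_injective _ hs.injective, Finset.card_fin]
  have hsum : ∑ x ∈ Finset.univ.image s, x = (m + 1 : ℝ) • bary s := by
    rw [Finset.sum_image hs.injective.injOn, sum_eq_card_smul_bary, Fintype.card_fin, Nat.cast_succ]
  rw [← hsum, ← hΩv _ (inGeneralPosition_of_affineIndependent hind) _ subset_rfl hcard, hv, hrange,
    simplexSet]

end Duality

theorem statement2_general {k n l : ℕ} (hk : 1 ≤ k) (hn : k ≤ n)
    (s : Fin l → Fin k → Euc n) (hs : ∀ i, AffineIndependent ℝ (s i))
    (F : Fin l → Euc n)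
    (hequil : equil ((k : ℝ) - 1) s F) :
    IsBeamSum (k + 1) (sys ((k : ℝ) - 1) s F) := by
  obtain ⟨m, rfl⟩ := Nat.exists_eq_add_one.2 hk
  have hpos (i : Fin l) : (μH[((m + 1 : ℕ) : ℝ) - 1] (simplexSet (s i))).toReal ≠ 0 := by
    simpa using (hausdorffMeasure_simplexSet_pos (hs i)).ne'
  by_contra hsys
  obtain ⟨φ, hφsys, hφ⟩ := Submodule.exists_le_ker_of_notMem (p := beamSums n (m + 2)) hsys
  obtain ⟨Ω, v₀, hΩ, hφΩ⟩ := exists_forall_uniformLoad_eq_inner_of_beamSums_le_ker hn hφ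
  refine hφsys ?_
  rw [sys_eq_sum_smul_uniformLoad hpos, map_sum]
  refine Eq.trans (Finset.sum_congr rfl fun i _ => ?_)
    (hequil.sum_mul_inner_add_map_bary_eq_zero hΩ v₀ (m + 1))
  rw [map_smul, smul_eq_mul, ← hφΩ _ (hs i), Nat.cast_succ, add_sub_cancel_right]

/-- Every equilibrium system of forces on `(k−1)`-simplices in `ℝⁿ`
(`k ≥ 1`, `n ≥ k + 1`) is a finite sum of `k`-beams with symmetric coefficient
matrices structural for their simplices.  Here a `(k−1)`-simplex is recorded by its
`k` vertices, and a `k`-simplex by its `k + 1` vertices. -/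
theorem statement2 {k n l : ℕ} (hk : 1 ≤ k) (hn : k + 1 ≤ n)
    (s : Fin l → Fin k → Euc n) (hs : ∀ i, AffineIndependent ℝ (s i))
    (F : Fin l → Euc n)
    (hequil : equil ((k : ℝ) - 1) s F) :
    IsBeamSum (k + 1) (sys ((k : ℝ) - 1) s F) :=
  statement2_general hk (by omega) s hs F hequil

end
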